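/- Let d ≥ 1, 1 ≤ p < ∞, m ∈ ℤ_{≥0} with m > d/p, and δ ≥ 0. There exists a constant C > 0 such that for all f, g ∈ C_c^∞(ℝ^d), ‖f · g‖_{H^{m,p}_δ} ≤ C · ‖f‖_{H^{m,p}_δ} · ‖g‖_{H^{m,p}_δ} (the weighted Sobolev space H^{m,p}_δ(ℝ^d) is a Banach algebra). -/

import Mathlib

open MeasureTheory

/-- The Japanese bracket `⟨x⟩ = √(1 + |x|²)`. -/
noncomputable def jb {d : ℕ} (x : EuclideanSpace ℝ (Fin d)) : ℝ := Real.sqrt (1 + ‖x‖ ^ 2)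

/-- Partial derivative in the `i`-th coordinate direction. -/
noncomputable def pderiv' {d : ℕ} {F : Type*} [NormedAddCommGroup F] [NormedSpace ℝ F]
    (i : Fin d) (f : EuclideanSpace ℝ (Fin d) → F) : EuclideanSpace ℝ (Fin d) → F :=
  fun x => fderiv ℝ f x (EuclideanSpace.single i 1)

/-- Multi-index derivative `∂^α f`. -/
noncomputable def mderiv {d : ℕ} {F : Type*} [NormedAddCommGroup F] [NormedSpace ℝ F]
    (α : Fin d → ℕ) (f : EuclideanSpace ℝ (Fin d) → F) : EuclideanSpace ℝ (Fin d) → F :=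
  (List.finRange d).foldr (fun i g => (pderiv' i)^[α i] g) f

/-- Weighted `L^p` norm `‖⟨x⟩^δ f‖_{L^p}`. -/
noncomputable def wLp {d : ℕ} {F : Type*} [NormedAddCommGroup F] [NormedSpace ℝ F]
    (p δ : ℝ) (f : EuclideanSpace ℝ (Fin d) → F) : ℝ :=
  (eLpNorm (fun x => jb x ^ δ • f x) (ENNReal.ofReal p) volume).toReal

/-- Weighted Sobolev norm `‖f‖_{H^{m,p}_δ} = Σ_{|α| ≤ m} ‖⟨x⟩^δ ∂^α f‖_{L^p}`. -/
noncomputable def Hnorm (d m : ℕ) {F : Type*} [NormedAddCommGroup F] [NormedSpace ℝ F]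
    (p δ : ℝ) (f : EuclideanSpace ℝ (Fin d) → F) : ℝ :=
  ∑ α ∈ Finset.univ.filter (fun α : Fin d → Fin (m + 1) => ∑ i, (α i : ℕ) ≤ m),
    wLp p δ (mderiv (fun i => (α i : ℕ)) f)

open Metric Set
open scoped ENNReal NNReal ProbabilityTheory

/-! Averaging the fundamental theorem of calculus over directions in the unit ball bounds `|u x|` by
an integral over radii `s ∈ (0, 1)` of the ball averages `A_s (|u| + |Du|) x`. A weight that varies
by a bounded factor over unit distances, such as `⟨x⟩^δ`, passes inside the averages. Since `A_s`
maps `L^p` to `L^q` with norm at most `μ(B_s)^{-(1/p - 1/q)}`, which is integrable in `s` when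
`d (1/p - 1/q) < 1`, Minkowski's inequality yields the weighted Sobolev embedding of `W^{1,p}` into
`L^q`, and iterating it trades derivatives for integrability.

By the Leibniz rule the theorem reduces to bounding `D^i f · D^j g` with `i + j = n ≤ m`. The two
factors have `(m - i) + (m - j) = 2 m - n ≥ m` derivatives to spare, so at the cost
`t = (1/p) / (2 m - n)` in the exponent per derivative they embed into Lebesgue spaces whose
exponents are Hölder conjugate relative to `p`; here `m > d/p` gives `d t < 1`. The weight is at
least `1`, so one weight may be replaced by two. -/

section Lebesgue

variable {α β : Type*} [MeasurableSpace α] [MeasurableSpace β] {μ : Measure α} {ν : Measure β}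

theorem rpow_lintegral_mul_le {k f : α → ℝ≥0∞} (hk : AEMeasurable k μ) (hf : AEMeasurable f μ)
    {q : ℝ} (hq : 1 ≤ q) :
    (∫⁻ x, k x * f x ∂μ) ^ q ≤ (∫⁻ x, k x ∂μ) ^ (q - 1) * ∫⁻ x, k x * f x ^ q ∂μ := by
  have hq₀ : 0 < q := zero_lt_one.trans_le hq
  have hq₁ : 0 ≤ 1 - 1 / q := by rw [sub_nonneg, div_le_one hq₀]; exact hq
  have split (x : α) : k x * f x = k x ^ (1 - 1 / q) * (k x * f x ^ q) ^ (1 / q) := by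
    rw [ENNReal.mul_rpow_of_nonneg _ _ (by positivity), ← mul_assoc,
      ← ENNReal.rpow_add_of_nonneg _ _ hq₁ (by positivity), ← ENNReal.rpow_mul,
      mul_one_div_cancel hq₀.ne', sub_add_cancel, ENNReal.rpow_one, ENNReal.rpow_one]
  calc (∫⁻ x, k x * f x ∂μ) ^ q
      = (∫⁻ x, k x ^ (1 - 1 / q) * (k x * f x ^ q) ^ (1 / q) ∂μ) ^ q := by simp_rw [← split]
    _ ≤ ((∫⁻ x, k x ∂μ) ^ (1 - 1 / q) * (∫⁻ x, k x * f x ^ q ∂μ) ^ (1 / q)) ^ q := by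
        gcongr
        exact ENNReal.lintegral_mul_norm_pow_le hk (hk.mul (hf.pow_const q)) hq₁ (by positivity)
          (by ring)
    _ = (∫⁻ x, k x ∂μ) ^ (q - 1) * ∫⁻ x, k x * f x ^ q ∂μ := by
        rw [ENNReal.mul_rpow_of_nonneg _ _ hq₀.le, ← ENNReal.rpow_mul, ← ENNReal.rpow_mul,
          one_div_mul_cancel hq₀.ne', ENNReal.rpow_one, sub_mul, one_mul,
          one_div_mul_cancel hq₀.ne']

theorem measurable_eLpNorm_prod_left [SFinite μ] {f : α → β → ℝ≥0∞}
    (hf : Measurable (Function.uncurry f)) (q : ℝ≥0∞) :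
    Measurable fun y ↦ eLpNorm (f · y) q μ := by
  rcases eq_or_ne q 0 with rfl | hq₀
  · simp
  rcases eq_or_ne q ∞ with rfl | hq
  · refine measurable_of_Iic fun a ↦ ?_
    have mem_iff (y : β) : eLpNorm (f · y) ∞ μ ≤ a ↔ μ {x | ¬ f x y ≤ a} = 0 := by
      rw [eLpNorm_exponent_top]
      exact ⟨fun h ↦ (ae_le_eLpNormEssSup (f := (f · y))).mono fun x hx ↦ hx.trans h,
        fun h ↦ eLpNormEssSup_le_of_ae_enorm_bound (f := (f · y)) h⟩
    simp only [preimage, mem_Iic, mem_iff]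
    exact measurable_measure_prodMk_right (hf measurableSet_Iic).compl
      (measurableSet_singleton 0)
  · simp_rw [eLpNorm_eq_lintegral_rpow_enorm_toReal hq₀ hq, enorm_eq_self]
    exact (hf.pow_const _).lintegral_prod_left'.pow_const _

theorem lintegral_div_eLpNorm_rpow_le_one {f : α → ℝ≥0∞} (hf : AEMeasurable f μ) {q : ℝ≥0∞}
    (hq₀ : q ≠ 0) (hq_top : q ≠ ∞) : ∫⁻ x, (f x / eLpNorm f q μ) ^ q.toReal ∂μ ≤ 1 := by
  have hr : 0 < q.toReal := ENNReal.toReal_pos hq₀ hq_top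
  have eLpNorm_rpow : eLpNorm f q μ ^ q.toReal = ∫⁻ x, f x ^ q.toReal ∂μ := by
    simp only [eLpNorm_eq_lintegral_rpow_enorm_toReal hq₀ hq_top, enorm_eq_self,
      ← ENNReal.rpow_mul, one_div_mul_cancel hr.ne', ENNReal.rpow_one]
  simp_rw [ENNReal.div_rpow_of_nonneg _ _ hr.le, div_eq_mul_inv]
  rw [lintegral_mul_const'' _ (hf.pow_const _), ← eLpNorm_rpow]
  exact ENNReal.mul_inv_le_one _

theorem ae_eLpNorm_mul_div_eLpNorm_eq {f : α → ℝ≥0∞} (hf : AEMeasurable f μ) {q : ℝ≥0∞}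
    (hq₀ : q ≠ 0) (h_top : eLpNorm f q μ ≠ ∞) :
    ∀ᵐ x ∂μ, eLpNorm f q μ * (f x / eLpNorm f q μ) = f x := by
  rcases eq_or_ne (eLpNorm f q μ) 0 with h₀ | h₀
  · filter_upwards [(eLpNorm_eq_zero_iff hf.aestronglyMeasurable hq₀).1 h₀] with x hx
    exact ENNReal.mul_div_cancel' (fun _ ↦ hx) fun h ↦ absurd h h_top
  · exact .of_forall fun x ↦ ENNReal.mul_div_cancel h₀ h_top

theorem eLpNorm_top_lintegral_le [SFinite μ] [SFinite ν] {f : α → β → ℝ≥0∞}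
    (hf : Measurable (Function.uncurry f)) :
    eLpNorm (fun x ↦ ∫⁻ y, f x y ∂ν) ∞ μ ≤ ∫⁻ y, eLpNorm (f · y) ∞ μ ∂ν := by
  have le_eLpNorm : ∀ᵐ x ∂μ, ∀ᵐ y ∂ν, f x y ≤ eLpNorm (f · y) ∞ μ :=
    (Measure.ae_ae_comm (p := fun x y ↦ f x y ≤ eLpNorm (f · y) ∞ μ)
      (measurableSet_le hf ((measurable_eLpNorm_prod_left hf ∞).comp measurable_snd))).2
      (.of_forall fun y ↦ ae_le_eLpNormEssSup (f := (f · y)))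
  exact eLpNormEssSup_le_of_ae_enorm_bound (le_eLpNorm.mono fun x hx ↦ lintegral_mono_ae hx)

/- Hölder's inequality with respect to the density `k y = ‖f(·, y)‖_q`, applied to
`f x y = k y * (f x y / k y)`, replaces the usual duality argument. -/
theorem eLpNorm_lintegral_le [SFinite μ] [SFinite ν] {f : α → β → ℝ≥0∞}
    (hf : Measurable (Function.uncurry f)) {q : ℝ≥0∞} (hq : 1 ≤ q) :
    eLpNorm (fun x ↦ ∫⁻ y, f x y ∂ν) q μ ≤ ∫⁻ y, eLpNorm (f · y) q μ ∂ν := by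
  rcases eq_or_ne q ∞ with rfl | hq_top
  · exact eLpNorm_top_lintegral_le hf
  set k : β → ℝ≥0∞ := fun y ↦ eLpNorm (f · y) q μ
  rcases eq_or_ne (∫⁻ y, k y ∂ν) ∞ with h_top | h_top
  · simp [h_top]
  have hk : Measurable k := measurable_eLpNorm_prod_left hf q
  have hf_y (y : β) : Measurable (f · y) := hf.comp measurable_prodMk_right
  have hq₀ : q ≠ 0 := (zero_lt_one.trans_le hq).ne'
  have hr : 1 ≤ q.toReal := ENNReal.toReal_mono hq_top hq
  have hr₀ : 0 < q.toReal := zero_lt_one.trans_le hr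
  have mul_div_k : ∀ᵐ x ∂μ, ∀ᵐ y ∂ν, k y * (f x y / k y) = f x y :=
    (Measure.ae_ae_comm (p := fun x y ↦ k y * (f x y / k y) = f x y)
      (measurableSet_eq_fun (by fun_prop) hf)).2 <| (ae_lt_top hk h_top).mono fun y hy ↦
        ae_eLpNorm_mul_div_eLpNorm_eq (hf_y y).aemeasurable hq₀ hy.ne
  rw [eLpNorm_eq_lintegral_rpow_enorm_toReal hq₀ hq_top, one_div, ENNReal.rpow_inv_le_iff hr₀]
  simp only [enorm_eq_self]
  calc ∫⁻ x, (∫⁻ y, f x y ∂ν) ^ q.toReal ∂μ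
      ≤ ∫⁻ x, (∫⁻ y, k y ∂ν) ^ (q.toReal - 1)
          * ∫⁻ y, k y * (f x y / k y) ^ q.toReal ∂ν ∂μ := by
        refine lintegral_mono_ae (mul_div_k.mono fun x hx ↦ ?_)
        rw [← lintegral_congr_ae hx]
        exact rpow_lintegral_mul_le hk.aemeasurable (by fun_prop) hr
    _ = (∫⁻ y, k y ∂ν) ^ (q.toReal - 1)
          * ∫⁻ y, k y * ∫⁻ x, (f x y / k y) ^ q.toReal ∂μ ∂ν := by
        rw [lintegral_const_mul _ (by fun_prop), lintegral_lintegral_swap (by fun_prop)]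
        congr! 3 with y
        exact lintegral_const_mul _ (by fun_prop)
    _ ≤ (∫⁻ y, k y ∂ν) ^ (q.toReal - 1) * ∫⁻ y, k y ∂ν := by
        gcongr with y
        exact mul_le_of_le_one_right'
          (lintegral_div_eLpNorm_rpow_le_one (hf_y y).aemeasurable hq₀ hq_top)
    _ = (∫⁻ y, k y ∂ν) ^ q.toReal := by
        nth_rw 2 [← ENNReal.rpow_one (∫⁻ y, k y ∂ν)]
        rw [← ENNReal.rpow_add_of_nonneg _ _ (sub_nonneg.2 hr) zero_le_one, sub_add_cancel]

theorem eLpNorm_le_eLpNorm_top_rpow_mul_eLpNorm_rpow {ε : Type*} [TopologicalSpace ε]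
    [ContinuousENorm ε] {f : α → ε} (hf : AEStronglyMeasurable f μ) {p q : ℝ≥0∞} (hp : p ≠ 0)
    (hpq : p ≤ q) :
    eLpNorm f q μ ≤ eLpNorm f ∞ μ ^ (1 - (p / q).toReal) * eLpNorm f p μ ^ (p / q).toReal := by
  rcases eq_or_ne q ∞ with rfl | hq_top
  · simp
  have hp_top : p ≠ ∞ := ne_top_of_le_ne_top hq_top hpq
  have hq : q ≠ 0 := ((pos_iff_ne_zero.2 hp).trans_le hpq).ne'
  have hr : 0 < p.toReal := ENNReal.toReal_pos hp hp_top
  have hrs : p.toReal ≤ q.toReal := ENNReal.toReal_mono hq_top hpq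
  have hs : 0 < q.toReal := hr.trans_le hrs
  set M := eLpNorm f ∞ μ
  have lintegral_le : ∫⁻ x, ‖f x‖ₑ ^ q.toReal ∂μ
      ≤ M ^ (q.toReal - p.toReal) * ∫⁻ x, ‖f x‖ₑ ^ p.toReal ∂μ := by
    rw [← lintegral_const_mul'' _ (hf.enorm.pow_const _)]
    refine lintegral_mono_ae ((ae_le_eLpNormEssSup (f := f)).mono fun x hx ↦ ?_)
    calc ‖f x‖ₑ ^ q.toReal
        = ‖f x‖ₑ ^ (q.toReal - p.toReal) * ‖f x‖ₑ ^ p.toReal := by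
          rw [← ENNReal.rpow_add_of_nonneg _ _ (sub_nonneg.2 hrs) hr.le, sub_add_cancel]
      _ ≤ M ^ (q.toReal - p.toReal) * ‖f x‖ₑ ^ p.toReal := by gcongr; exact hx
  rw [eLpNorm_eq_lintegral_rpow_enorm_toReal hq hq_top,
    eLpNorm_eq_lintegral_rpow_enorm_toReal hp hp_top, one_div, ENNReal.rpow_inv_le_iff hs,
    ENNReal.mul_rpow_of_nonneg _ _ hs.le, ← ENNReal.rpow_mul, ← ENNReal.rpow_mul,
    ← ENNReal.rpow_mul, ENNReal.toReal_div]
  convert lintegral_le using 2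
  · congr 1
    field_simp
  · rw [one_div_mul_eq_div, div_mul_cancel₀ _ hs.ne', div_self hr.ne', ENNReal.rpow_one]

end Lebesgue

section BallAverage

open Module

theorem isProbabilityMeasure_cond_ball {X : Type*} [PseudoMetricSpace X] [ProperSpace X]
    [MeasurableSpace X] (μ : Measure X) [μ.IsOpenPosMeasure] [IsFiniteMeasureOnCompacts μ]
    {r : ℝ} (hr : 0 < r) (x : X) : IsProbabilityMeasure μ[|ball x r] :=
  ProbabilityTheory.cond_isProbabilityMeasure_of_finite (measure_ball_pos μ x hr).ne'
    measure_ball_lt_top.ne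

variable {E : Type*} [NormedAddCommGroup E] [NormedSpace ℝ E] [MeasurableSpace E]
  {μ : Measure E} {V : E → ℝ≥0∞}

variable (μ) in
/-- The mean value of `V` over the ball of radius `s` about `x`, written as an integral over the
unit ball so that it depends measurably on `(x, s)`. -/
noncomputable def ballAverage (V : E → ℝ≥0∞) (s : ℝ) (x : E) : ℝ≥0∞ :=
  ∫⁻ z, V (x + s • z) ∂μ[|ball (0 : E) 1]

variable [FiniteDimensional ℝ E] [BorelSpace E]

theorem measurable_ballAverage [SFinite μ] (hV : Measurable V) :
    Measurable fun y : E × ℝ ↦ ballAverage μ V y.2 y.1 :=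
  Measurable.lintegral_prod_right' (f := fun y : (E × ℝ) × E ↦ V (y.1.1 + y.1.2 • y.2))
    (by fun_prop)

theorem measurable_ballAverage_apply [SFinite μ] (hV : Measurable V) (s : ℝ) :
    Measurable (ballAverage μ V s) :=
  (measurable_ballAverage hV).comp measurable_prodMk_right

variable [μ.IsAddHaarMeasure]

theorem map_add_smul_cond_ball_le (x : E) {s : ℝ} (hs : 0 < s) :
    (μ[|ball (0 : E) 1]).map (fun z ↦ x + s • z) ≤ (μ (ball 0 s))⁻¹ • μ := by
  refine Measure.le_iff.2 fun A hA ↦ ?_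
  have ofReal_ne_zero : ENNReal.ofReal (s ^ finrank ℝ E) ≠ 0 := by simp [hs]
  calc (μ[|ball (0 : E) 1]).map (fun z ↦ x + s • z) A
      = (μ (ball 0 1))⁻¹ * μ (ball 0 1 ∩ (s • ·) ⁻¹' ((x + ·) ⁻¹' A)) := by
        rw [Measure.map_apply (by fun_prop) hA, ProbabilityTheory.cond_apply measurableSet_ball]
        rfl
    _ ≤ (μ (ball 0 1))⁻¹ * μ ((s • ·) ⁻¹' ((x + ·) ⁻¹' A)) := by gcongr; exact inter_subset_right
    _ = (μ (ball 0 s))⁻¹ * μ A := by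
        rw [Measure.addHaar_preimage_smul μ hs.ne', measure_preimage_add,
          Measure.addHaar_ball_of_pos μ 0 hs,
          ENNReal.mul_inv (.inl ofReal_ne_zero) (.inl ENNReal.ofReal_ne_top),
          abs_of_pos (by positivity), ENNReal.ofReal_inv_of_pos (by positivity)]
        ring

theorem eLpNorm_ballAverage_le (hV : Measurable V) (s : ℝ) {p : ℝ≥0∞} (hp : 1 ≤ p) :
    eLpNorm (ballAverage μ V s) p μ ≤ eLpNorm V p μ := by
  have := isProbabilityMeasure_cond_ball μ zero_lt_one (0 : E)
  calc eLpNorm (ballAverage μ V s) p μ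
      ≤ ∫⁻ z, eLpNorm (fun x ↦ V (x + s • z)) p μ ∂μ[|ball (0 : E) 1] :=
        eLpNorm_lintegral_le (f := fun x z ↦ V (x + s • z)) (by fun_prop) hp
    _ = ∫⁻ _, eLpNorm V p μ ∂μ[|ball (0 : E) 1] := lintegral_congr fun z ↦
        eLpNorm_comp_measurePreserving hV.aestronglyMeasurable
          (measurePreserving_add_right μ (s • z))
    _ = eLpNorm V p μ := by rw [lintegral_const, measure_univ, mul_one]

theorem ballAverage_le_eLpNorm (hV : Measurable V) {s : ℝ} (hs : 0 < s) {p : ℝ≥0∞} (hp : 1 ≤ p)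
    (x : E) : ballAverage μ V s x ≤ (μ (ball 0 s))⁻¹ ^ (1 / p).toReal * eLpNorm V p μ := by
  have := isProbabilityMeasure_cond_ball μ zero_lt_one (0 : E)
  have shift_meas : Measurable fun z : E ↦ x + s • z := by fun_prop
  calc ballAverage μ V s x
      = eLpNorm (V ∘ fun z ↦ x + s • z) 1 μ[|ball (0 : E) 1] := by
        simp [eLpNorm_one_eq_lintegral_enorm, ballAverage]
    _ ≤ eLpNorm (V ∘ fun z ↦ x + s • z) p μ[|ball (0 : E) 1] :=
        eLpNorm_le_eLpNorm_of_exponent_le hp (hV.comp shift_meas).aestronglyMeasurable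
    _ = eLpNorm V p ((μ[|ball (0 : E) 1]).map fun z ↦ x + s • z) :=
        (eLpNorm_map_measure hV.aestronglyMeasurable shift_meas.aemeasurable).symm
    _ ≤ eLpNorm V p ((μ (ball 0 s))⁻¹ • μ) :=
        eLpNorm_mono_measure V (map_add_smul_cond_ball_le x hs)
    _ ≤ (μ (ball 0 s))⁻¹ ^ (1 / p).toReal * eLpNorm V p μ := eLpNorm_smul_measure_le ..

theorem eLpNorm_ballAverage_le_of_inv_eq_add (hV : Measurable V) {s : ℝ} (hs : 0 < s)
    {p q : ℝ≥0∞} {t : ℝ≥0} (hp : 1 ≤ p) (hpq : p⁻¹ = q⁻¹ + t) :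
    eLpNorm (ballAverage μ V s) q μ ≤ (μ (ball 0 s))⁻¹ ^ (t : ℝ) * eLpNorm V p μ := by
  have hp₀ : p ≠ 0 := (zero_lt_one.trans_le hp).ne'
  have p_le_q : p ≤ q := ENNReal.inv_le_inv.1 (hpq ▸ le_self_add)
  have hθ : 0 ≤ 1 - (p / q).toReal := sub_nonneg.2 <| ENNReal.toReal_mono ENNReal.one_ne_top <|
    ENNReal.div_le_of_le_mul <| (one_mul q).symm ▸ p_le_q
  have exponent_eq : (1 / p).toReal * (1 - (p / q).toReal) = t := by
    have div_eq : p⁻¹ * (p / q) = q⁻¹ := by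
      rcases eq_or_ne p ∞ with rfl | hp_top
      · simp [top_le_iff.1 p_le_q]
      · rw [div_eq_mul_inv, ← mul_assoc, ENNReal.inv_mul_cancel hp₀ hp_top, one_mul]
    have hq : q⁻¹ ≠ ∞ := ENNReal.inv_ne_top.2 ((pos_iff_ne_zero.2 hp₀).trans_le p_le_q).ne'
    rw [one_div, mul_sub, mul_one, ← ENNReal.toReal_mul, div_eq, hpq,
      ENNReal.toReal_add hq ENNReal.coe_ne_top, add_sub_cancel_left, ENNReal.coe_toReal]
  calc eLpNorm (ballAverage μ V s) q μ
      ≤ eLpNorm (ballAverage μ V s) ∞ μ ^ (1 - (p / q).toReal)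
          * eLpNorm (ballAverage μ V s) p μ ^ (p / q).toReal :=
        eLpNorm_le_eLpNorm_top_rpow_mul_eLpNorm_rpow
          (measurable_ballAverage_apply hV s).aestronglyMeasurable hp₀ p_le_q
    _ ≤ ((μ (ball 0 s))⁻¹ ^ (1 / p).toReal * eLpNorm V p μ) ^ (1 - (p / q).toReal)
          * eLpNorm V p μ ^ (p / q).toReal := by
        gcongr
        · exact eLpNormEssSup_le_of_ae_enorm_bound
            (.of_forall fun x ↦ ballAverage_le_eLpNorm hV hs hp x)
        · exact eLpNorm_ballAverage_le hV s hp
    _ = (μ (ball 0 s))⁻¹ ^ (t : ℝ) * eLpNorm V p μ := by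
        rw [ENNReal.mul_rpow_of_nonneg _ _ hθ, ← ENNReal.rpow_mul, exponent_eq, mul_assoc,
          ← ENNReal.rpow_add_of_nonneg _ _ hθ ENNReal.toReal_nonneg, sub_add_cancel,
          ENNReal.rpow_one]

theorem lintegral_inv_measure_ball_rpow_ne_top {t : ℝ} (ht₀ : 0 ≤ t) (ht : finrank ℝ E * t < 1) :
    ∫⁻ s in Ioo 0 1, (μ (ball (0 : E) s))⁻¹ ^ t ≠ ∞ := by
  have inv_rpow_eq {s : ℝ} (hs : 0 < s) : (μ (ball (0 : E) s))⁻¹ ^ t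
      = ENNReal.ofReal (s ^ (-(finrank ℝ E * t))) * (μ (ball (0 : E) 1))⁻¹ ^ t := by
    have ofReal_ne_zero : ENNReal.ofReal (s ^ finrank ℝ E) ≠ 0 := by simp [hs]
    rw [Measure.addHaar_ball_of_pos μ 0 hs,
      ENNReal.mul_inv (.inl ofReal_ne_zero) (.inl ENNReal.ofReal_ne_top),
      ENNReal.mul_rpow_of_nonneg _ _ ht₀, ← ENNReal.ofReal_inv_of_pos (by positivity),
      ENNReal.ofReal_rpow_of_pos (by positivity), Real.inv_rpow (by positivity),
      ← Real.rpow_natCast_mul hs.le, Real.rpow_neg hs.le]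
  have rpow_integrable : IntegrableOn (fun s : ℝ ↦ s ^ (-(finrank ℝ E * t))) (Ioo 0 1) :=
    (((intervalIntegrable_iff_integrableOn_Ioc_of_le zero_le_one).1
      (intervalIntegral.intervalIntegrable_rpow' (by linarith))).mono_set Ioo_subset_Ioc_self)
  rw [setLIntegral_congr_fun measurableSet_Ioo fun s hs ↦ inv_rpow_eq hs.1,
    lintegral_mul_const _ (by fun_prop)]
  exact ENNReal.mul_ne_top rpow_integrable.lintegral_lt_top.ne
    (ENNReal.rpow_ne_top_of_nonneg ht₀ (ENNReal.inv_ne_top.2 (measure_ball_pos μ _ one_pos).ne'))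

end BallAverage

section WeightedSobolev

open Module

variable {E F : Type*} [NormedAddCommGroup E] [NormedSpace ℝ E] [NormedAddCommGroup F]
  [NormedSpace ℝ F]

theorem enorm_le_lintegral_add_fderiv {u : E → F} (hu : ContDiff ℝ 1 u) (x : E) {z : E}
    (hz : ‖z‖ ≤ 1) :
    ‖u x‖ₑ ≤ ∫⁻ s in Ioo (0 : ℝ) 1, (‖u (x + s • z)‖ₑ + ‖fderiv ℝ u (x + s • z)‖ₑ) := by
  set φ : ℝ → F := fun s ↦ (1 - s) • u (x + s • z)
  have hasDerivAt_φ (s : ℝ) : HasDerivAt φ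
      ((1 - s) • fderiv ℝ u (x + s • z) z + (-1 : ℝ) • u (x + s • z)) s := by
    have hasDerivAt_line : HasDerivAt (fun s : ℝ ↦ x + s • z) z s := by
      simpa using ((hasDerivAt_id s).smul_const z).const_add x
    exact ((hasDerivAt_id s).const_sub 1).smul
      ((hu.differentiable one_ne_zero _).hasFDerivAt.comp_hasDerivAt s hasDerivAt_line)
  have enorm_deriv_le {s : ℝ} (hs : s ∈ Ioo 0 1) :
      ‖deriv φ s‖ₑ ≤ ‖u (x + s • z)‖ₑ + ‖fderiv ℝ u (x + s • z)‖ₑ := by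
    have enorm_one_sub_le : ‖1 - s‖ₑ ≤ 1 := by
      rw [← enorm_one (G := ℝ), enorm_le_iff_norm_le, norm_one, Real.norm_eq_abs, abs_le]
      constructor <;> linarith [hs.1, hs.2]
    have enorm_z_le : ‖z‖ₑ ≤ 1 := by
      rwa [← enorm_one (G := ℝ), enorm_le_iff_norm_le, norm_one]
    calc ‖deriv φ s‖ₑ
        ≤ ‖1 - s‖ₑ * (‖fderiv ℝ u (x + s • z)‖ₑ * ‖z‖ₑ) + ‖u (x + s • z)‖ₑ := by
          rw [(hasDerivAt_φ s).deriv, neg_one_smul]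
          refine (enorm_add_le _ _).trans ?_
          rw [enorm_neg, enorm_smul]
          gcongr
          exact ContinuousLinearMap.le_opENorm _ _
      _ ≤ 1 * (‖fderiv ℝ u (x + s • z)‖ₑ * 1) + ‖u (x + s • z)‖ₑ := by gcongr
      _ = ‖u (x + s • z)‖ₑ + ‖fderiv ℝ u (x + s • z)‖ₑ := by rw [one_mul, mul_one, add_comm]
  calc ‖u x‖ₑ = ‖φ 1 - φ 0‖ₑ := by simp [φ]
    _ ≤ ∫⁻ s in Icc 0 1, ‖deriv φ s‖ₑ :=
        enorm_sub_le_lintegral_deriv_of_contDiffOn_Icc (by fun_prop) zero_le_one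
    _ = ∫⁻ s in Ioo 0 1, ‖deriv φ s‖ₑ := by rw [restrict_Ioo_eq_restrict_Icc]
    _ ≤ ∫⁻ s in Ioo 0 1, (‖u (x + s • z)‖ₑ + ‖fderiv ℝ u (x + s • z)‖ₑ) :=
        setLIntegral_mono' measurableSet_Ioo fun s hs ↦ enorm_deriv_le hs

variable [MeasurableSpace E]

/-- A measurable weight whose values at points at distance at most `1` are comparable up to the
factor `K`; such a weight may be moved inside averages over balls of radius at most `1`. -/
structure IsModerateWeight (K : ℝ≥0) (w : E → ℝ) : Prop where
  measurable : Measurable w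
  enorm_le : ∀ {x y}, dist x y ≤ 1 → ‖w x‖ₑ ≤ K * ‖w y‖ₑ

variable {μ : Measure E} {K : ℝ≥0} {w : E → ℝ}

theorem IsModerateWeight.enorm_smul_le_lintegral_segment (hw : IsModerateWeight K w) {u : E → F}
    (hu : ContDiff ℝ 1 u) (x : E) {z : E} (hz : ‖z‖ ≤ 1) :
    ‖w x • u x‖ₑ ≤ K * ∫⁻ s in Ioo (0 : ℝ) 1, (‖w (x + s • z) • u (x + s • z)‖ₑ
      + ‖w (x + s • z) • fderiv ℝ u (x + s • z)‖ₑ) := by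
  have enorm_weight_le {s : ℝ} (hs : s ∈ Ioo 0 1) : ‖w x‖ₑ ≤ K * ‖w (x + s • z)‖ₑ := by
    refine hw.enorm_le ?_
    rw [dist_self_add_right, norm_smul, Real.norm_of_nonneg hs.1.le]
    exact mul_le_one₀ hs.2.le (norm_nonneg z) hz
  calc ‖w x • u x‖ₑ
      ≤ ‖w x‖ₑ * ∫⁻ s in Ioo (0 : ℝ) 1, (‖u (x + s • z)‖ₑ + ‖fderiv ℝ u (x + s • z)‖ₑ) := by
        rw [enorm_smul]
        gcongr
        exact enorm_le_lintegral_add_fderiv hu x hz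
    _ = ∫⁻ s in Ioo (0 : ℝ) 1, ‖w x‖ₑ * (‖u (x + s • z)‖ₑ + ‖fderiv ℝ u (x + s • z)‖ₑ) :=
        (lintegral_const_mul' _ _ enorm_ne_top).symm
    _ ≤ ∫⁻ s in Ioo (0 : ℝ) 1, K * (‖w (x + s • z) • u (x + s • z)‖ₑ
          + ‖w (x + s • z) • fderiv ℝ u (x + s • z)‖ₑ) := by
        refine setLIntegral_mono' measurableSet_Ioo fun s hs ↦ ?_
        rw [enorm_smul, enorm_smul, ← mul_add, ← mul_assoc]
        gcongr
        exact enorm_weight_le hs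
    _ = _ := lintegral_const_mul' _ _ ENNReal.coe_ne_top

/-- The pointwise size of the weighted first-order jet of `u`, in terms of which the embedding of
`W^{1,p}` into `L^q` is expressed. -/
noncomputable def weightedJetSize (w : E → ℝ) (u : E → F) (x : E) : ℝ≥0∞ :=
  ‖w x • u x‖ₑ + ‖w x • fderiv ℝ u x‖ₑ

variable [BorelSpace E]

theorem IsModerateWeight.measurable_weightedJetSize (hw : IsModerateWeight K w) {u : E → F}
    (hu : ContDiff ℝ 1 u) : Measurable (weightedJetSize w u) := by
  unfold weightedJetSize
  simp_rw [enorm_smul]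
  exact (hw.measurable.enorm.mul hu.continuous.enorm.measurable).add
    (hw.measurable.enorm.mul (hu.continuous_fderiv one_ne_zero).enorm.measurable)

variable [FiniteDimensional ℝ E]

theorem IsModerateWeight.aestronglyMeasurable_smul (hw : IsModerateWeight K w) {u : E → F}
    (hu : Continuous u) : AEStronglyMeasurable (fun x ↦ w x • u x) μ :=
  hw.measurable.aestronglyMeasurable.smul hu.aestronglyMeasurable

theorem IsModerateWeight.eLpNorm_weightedJetSize_le (hw : IsModerateWeight K w) {u : E → F}
    (hu : ContDiff ℝ 1 u) {p : ℝ≥0∞} (hp : 1 ≤ p) :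
    eLpNorm (weightedJetSize w u) p μ
      ≤ eLpNorm (fun x ↦ w x • u x) p μ + eLpNorm (fun x ↦ w x • fderiv ℝ u x) p μ := by
  have hu_meas : AEStronglyMeasurable (fun x ↦ ‖w x • u x‖ₑ) μ :=
    (hw.aestronglyMeasurable_smul hu.continuous).enorm.aestronglyMeasurable
  have hDu_meas : AEStronglyMeasurable (fun x ↦ ‖w x • fderiv ℝ u x‖ₑ) μ :=
    (hw.aestronglyMeasurable_smul (hu.continuous_fderiv one_ne_zero)).enorm.aestronglyMeasurable
  calc eLpNorm (weightedJetSize w u) p μ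
      ≤ eLpNorm (fun x ↦ ‖w x • u x‖ₑ) p μ + eLpNorm (fun x ↦ ‖w x • fderiv ℝ u x‖ₑ) p μ :=
        (eLpNorm_add_le hu_meas hDu_meas hp :)
    _ = eLpNorm (fun x ↦ w x • u x) p μ + eLpNorm (fun x ↦ w x • fderiv ℝ u x) p μ := by
        rw [eLpNorm_enorm, eLpNorm_enorm]

variable [μ.IsAddHaarMeasure]

theorem IsModerateWeight.enorm_smul_le_lintegral_ballAverage (hw : IsModerateWeight K w)
    {u : E → F} (hu : ContDiff ℝ 1 u) (x : E) :
    ‖w x • u x‖ₑ ≤ K * ∫⁻ s in Ioo (0 : ℝ) 1, ballAverage μ (weightedJetSize w u) s x := by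
  have := isProbabilityMeasure_cond_ball μ zero_lt_one (0 : E)
  have jet_measurable := hw.measurable_weightedJetSize hu
  calc ‖w x • u x‖ₑ = ∫⁻ _, ‖w x • u x‖ₑ ∂μ[|ball (0 : E) 1] := by
        rw [lintegral_const, measure_univ, mul_one]
    _ ≤ ∫⁻ z, K * (∫⁻ s in Ioo (0 : ℝ) 1, weightedJetSize w u (x + s • z)) ∂μ[|ball (0 : E) 1] :=
        lintegral_mono_ae <| (ProbabilityTheory.ae_cond_mem measurableSet_ball).mono fun z hz ↦
          hw.enorm_smul_le_lintegral_segment hu x (mem_ball_zero_iff.1 hz).le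
    _ = K * ∫⁻ s in Ioo (0 : ℝ) 1, ballAverage μ (weightedJetSize w u) s x := by
        rw [lintegral_const_mul' _ _ ENNReal.coe_ne_top, lintegral_lintegral_swap (by fun_prop)]
        rfl

/-- The constant in the embedding of `W^{1,p}` into `L^q`, where `t = 1/p - 1/q`, for weights that
are moderate with constant `K`. It is finite when `finrank ℝ E * t < 1`. -/
noncomputable def sobolevConst (μ : Measure E) (K t : ℝ≥0) : ℝ≥0∞ :=
  K * ∫⁻ s in Ioo (0 : ℝ) 1, (μ (ball 0 s))⁻¹ ^ (t : ℝ)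

theorem sobolevConst_ne_top (K : ℝ≥0) {t : ℝ≥0} (ht : finrank ℝ E * t < 1) :
    sobolevConst μ K t ≠ ∞ :=
  ENNReal.mul_ne_top ENNReal.coe_ne_top
    (lintegral_inv_measure_ball_rpow_ne_top t.2 (by exact_mod_cast ht))

theorem eLpNorm_smul_le_sobolevConst_mul (hw : IsModerateWeight K w) {u : E → F}
    (hu : ContDiff ℝ 1 u) {p q : ℝ≥0∞} {t : ℝ≥0} (hp : 1 ≤ p) (hpq : p⁻¹ = q⁻¹ + t) :
    eLpNorm (fun x ↦ w x • u x) q μ ≤ sobolevConst μ K t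
      * (eLpNorm (fun x ↦ w x • u x) p μ + eLpNorm (fun x ↦ w x • fderiv ℝ u x) p μ) := by
  have jet_measurable := hw.measurable_weightedJetSize hu
  have hq : 1 ≤ q := hp.trans (ENNReal.inv_le_inv.1 (hpq ▸ le_self_add))
  calc eLpNorm (fun x ↦ w x • u x) q μ
      ≤ K * eLpNorm (fun x ↦ ∫⁻ s in Ioo 0 1, ballAverage μ (weightedJetSize w u) s x) q μ := by
        exact eLpNorm_le_nnreal_smul_eLpNorm_of_ae_le_mul'
          (.of_forall fun x ↦ hw.enorm_smul_le_lintegral_ballAverage hu x) q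
    _ ≤ K * ∫⁻ s in Ioo 0 1, eLpNorm (ballAverage μ (weightedJetSize w u) s) q μ := by
        gcongr
        exact eLpNorm_lintegral_le (measurable_ballAverage jet_measurable) hq
    _ ≤ K * ∫⁻ s in Ioo 0 1, (μ (ball 0 s))⁻¹ ^ (t : ℝ) * eLpNorm (weightedJetSize w u) p μ := by
        gcongr K * ?_
        exact setLIntegral_mono' measurableSet_Ioo fun s hs ↦
          eLpNorm_ballAverage_le_of_inv_eq_add jet_measurable hs.1 hp hpq
    _ = sobolevConst μ K t * eLpNorm (weightedJetSize w u) p μ := by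
        have ball_measurable : Measurable fun s : ℝ ↦ (μ (ball (0 : E) s))⁻¹ ^ (t : ℝ) :=
          (Monotone.measurable fun _ _ h ↦ measure_mono (ball_subset_ball h)).inv.pow_const _
        rw [lintegral_mul_const _ ball_measurable, sobolevConst, mul_assoc]
    _ ≤ sobolevConst μ K t
          * (eLpNorm (fun x ↦ w x • u x) p μ + eLpNorm (fun x ↦ w x • fderiv ℝ u x) p μ) := by
        gcongr
        exact hw.eLpNorm_weightedJetSize_le hu hp

end WeightedSobolev

section SobolevAlgebra

open Module

theorem eLpNorm_smul_congr_norm {α F G : Type*} [MeasurableSpace α] {μ : Measure α} {p : ℝ≥0∞}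
    [NormedAddCommGroup F] [NormedSpace ℝ F] [NormedAddCommGroup G] [NormedSpace ℝ G] {u : α → F}
    {v : α → G} (w : α → ℝ) (huv : ∀ x, ‖u x‖ = ‖v x‖) :
    eLpNorm (fun x ↦ w x • u x) p μ = eLpNorm (fun x ↦ w x • v x) p μ :=
  eLpNorm_congr_norm_ae (.of_forall fun x ↦ by rw [norm_smul, norm_smul, huv])

variable {E F A : Type*} [NormedAddCommGroup E] [NormedSpace ℝ E] [NormedAddCommGroup F]
  [NormedSpace ℝ F] [NormedRing A] [NormedAlgebra ℝ A]

theorem norm_smul_iteratedFDeriv_mul_le {m n : ℕ} (hn : n ≤ m) {f g : E → A}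
    (hf : ContDiff ℝ m f) (hg : ContDiff ℝ m g) {c : ℝ} (hc : 1 ≤ ‖c‖) (x : E) :
    ‖c • iteratedFDeriv ℝ n (fun y ↦ f y * g y) x‖ ≤ ∑ i ∈ Finset.range (n + 1),
      (n.choose i : ℝ) * (‖c • iteratedFDeriv ℝ i f x‖ * ‖c • iteratedFDeriv ℝ (n - i) g x‖) := by
  calc ‖c • iteratedFDeriv ℝ n (fun y ↦ f y * g y) x‖
      ≤ ‖c‖ * ∑ i ∈ Finset.range (n + 1),
          (n.choose i : ℝ) * ‖iteratedFDeriv ℝ i f x‖ * ‖iteratedFDeriv ℝ (n - i) g x‖ := by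
        rw [norm_smul]
        gcongr
        exact norm_iteratedFDeriv_mul_le hf hg x (by exact_mod_cast hn)
    _ ≤ ‖c‖ * ‖c‖ * ∑ i ∈ Finset.range (n + 1),
          (n.choose i : ℝ) * ‖iteratedFDeriv ℝ i f x‖ * ‖iteratedFDeriv ℝ (n - i) g x‖ := by
        gcongr
        exact le_mul_of_one_le_left (norm_nonneg c) hc
    _ = _ := by
        rw [Finset.mul_sum]
        refine Finset.sum_congr rfl fun i _ ↦ ?_
        rw [norm_smul, norm_smul]
        ring

variable [MeasurableSpace E] {μ : Measure E} {K : ℝ≥0} {w : E → ℝ} {p : ℝ≥0∞}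

/-- The coordinate-free weighted Sobolev norm `∑_{k ≤ m} ‖w D^k f‖_{L^p}`, built from the Fréchet
derivatives of `f` and valued in `ℝ≥0∞`. -/
noncomputable def weightedSobolevNorm (μ : Measure E) (w : E → ℝ) (p : ℝ≥0∞) (m : ℕ) (f : E → F) :
    ℝ≥0∞ :=
  ∑ k ∈ Finset.range (m + 1), eLpNorm (fun x ↦ w x • iteratedFDeriv ℝ k f x) p μ

theorem eLpNorm_smul_iteratedFDeriv_le_weightedSobolevNorm {k m : ℕ} (hkm : k ≤ m) (f : E → F) :
    eLpNorm (fun x ↦ w x • iteratedFDeriv ℝ k f x) p μ ≤ weightedSobolevNorm μ w p m f :=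
  Finset.single_le_sum (f := fun k ↦ eLpNorm (fun x ↦ w x • iteratedFDeriv ℝ k f x) p μ)
    (fun _ _ ↦ zero_le) (Finset.mem_range_succ_iff.2 hkm)

variable [FiniteDimensional ℝ E] [BorelSpace E]

theorem IsModerateWeight.aestronglyMeasurable_norm_smul_iteratedFDeriv (hw : IsModerateWeight K w)
    {k m : ℕ} {f : E → F} (hf : ContDiff ℝ m f) (hkm : k ≤ m) :
    AEStronglyMeasurable (fun x ↦ ‖w x • iteratedFDeriv ℝ k f x‖) μ :=
  (hw.aestronglyMeasurable_smul (hf.continuous_iteratedFDeriv (by exact_mod_cast hkm))).norm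

variable [μ.IsAddHaarMeasure]

theorem eLpNorm_smul_iteratedFDeriv_le_sobolevConst_mul (hw : IsModerateWeight K w) {j m : ℕ}
    (hjm : j + 1 ≤ m) {f : E → F} (hf : ContDiff ℝ m f) {q : ℝ≥0∞} {t : ℝ≥0} (hp : 1 ≤ p)
    (hpq : p⁻¹ = q⁻¹ + t) :
    eLpNorm (fun x ↦ w x • iteratedFDeriv ℝ j f x) q μ ≤ sobolevConst μ K t
      * (eLpNorm (fun x ↦ w x • iteratedFDeriv ℝ j f x) p μ
        + eLpNorm (fun x ↦ w x • iteratedFDeriv ℝ (j + 1) f x) p μ) := by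
  have contDiff_iteratedFDeriv : ContDiff ℝ 1 (iteratedFDeriv ℝ j f) :=
    hf.iteratedFDeriv_right (by rw [add_comm]; exact_mod_cast hjm)
  have eLpNorm_fderiv_eq := eLpNorm_smul_congr_norm (μ := μ) (p := p)
    (u := fderiv ℝ (iteratedFDeriv ℝ j f)) (v := iteratedFDeriv ℝ (j + 1) f) w
    fun _ ↦ norm_fderiv_iteratedFDeriv
  have embedding := eLpNorm_smul_le_sobolevConst_mul (μ := μ) hw contDiff_iteratedFDeriv hp hpq
  rwa [eLpNorm_fderiv_eq] at embedding

/- Each derivative that is given up lowers `1/p` by `t`. -/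
theorem eLpNorm_smul_iteratedFDeriv_le (hw : IsModerateWeight K w) {m : ℕ} {f : E → F}
    (hf : ContDiff ℝ m f) (hp : 1 ≤ p) {t : ℝ≥0} (k : ℕ) {j : ℕ} (hjk : j + k ≤ m) {q : ℝ≥0∞}
    (hpq : p⁻¹ = q⁻¹ + k * t) :
    eLpNorm (fun x ↦ w x • iteratedFDeriv ℝ j f x) q μ
      ≤ (2 * sobolevConst μ K t) ^ k * weightedSobolevNorm μ w p m f := by
  induction k generalizing j q with
  | zero =>
    obtain rfl : p = q := by simpa using hpq
    simpa using eLpNorm_smul_iteratedFDeriv_le_weightedSobolevNorm hjk f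
  | succ k ih =>
    set r : ℝ≥0∞ := (q⁻¹ + t)⁻¹
    have inv_r : r⁻¹ = q⁻¹ + t := inv_inv _
    have hpr : p⁻¹ = r⁻¹ + k * t := by rw [inv_r, hpq]; push_cast; ring
    have hr : 1 ≤ r := hp.trans (ENNReal.inv_le_inv.1 (hpr ▸ le_self_add))
    calc eLpNorm (fun x ↦ w x • iteratedFDeriv ℝ j f x) q μ
        ≤ sobolevConst μ K t * (eLpNorm (fun x ↦ w x • iteratedFDeriv ℝ j f x) r μ
            + eLpNorm (fun x ↦ w x • iteratedFDeriv ℝ (j + 1) f x) r μ) :=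
          eLpNorm_smul_iteratedFDeriv_le_sobolevConst_mul hw (by lia) hf hr inv_r
      _ ≤ sobolevConst μ K t * ((2 * sobolevConst μ K t) ^ k * weightedSobolevNorm μ w p m f
            + (2 * sobolevConst μ K t) ^ k * weightedSobolevNorm μ w p m f) := by
          gcongr
          · exact ih (by lia) hpr
          · exact ih (by lia) hpr
      _ = (2 * sobolevConst μ K t) ^ (k + 1) * weightedSobolevNorm μ w p m f := by ring

/- With `1/q₁ = l t` and `1/q₂ = k t`, the embeddings of the two factors into `L^{q₁}` and `L^{q₂}`
use up the `k` and the `l` derivatives to spare, and Hölder's inequality applies. -/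
theorem eLpNorm_norm_smul_mul_norm_smul_le (hw : IsModerateWeight K w) {m : ℕ} {f g : E → A}
    (hf : ContDiff ℝ m f) (hg : ContDiff ℝ m g) (hp : 1 ≤ p) {t : ℝ≥0} {i j k l : ℕ}
    (hik : i + k ≤ m) (hjl : j + l ≤ m) (hp_inv : p⁻¹ = (k + l : ℕ) * t) :
    eLpNorm (fun x ↦ ‖w x • iteratedFDeriv ℝ i f x‖ * ‖w x • iteratedFDeriv ℝ j g x‖) p μ
      ≤ (2 * sobolevConst μ K t) ^ (k + l)
        * (weightedSobolevNorm μ w p m f * weightedSobolevNorm μ w p m g) := by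
  set q₁ : ℝ≥0∞ := (l * t)⁻¹
  set q₂ : ℝ≥0∞ := (k * t)⁻¹
  have hpq₁ : p⁻¹ = q₁⁻¹ + k * t := by rw [inv_inv, hp_inv]; push_cast; ring
  have hpq₂ : p⁻¹ = q₂⁻¹ + l * t := by rw [inv_inv, hp_inv]; push_cast; ring
  have inv_q₂ : q₂⁻¹ = k * t := inv_inv _
  have : ENNReal.HolderTriple q₁ q₂ p := ⟨by rw [hpq₁, inv_q₂]⟩
  have hf_meas := hw.aestronglyMeasurable_norm_smul_iteratedFDeriv (μ := μ) hf (show i ≤ m by lia)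
  have hg_meas := hw.aestronglyMeasurable_norm_smul_iteratedFDeriv (μ := μ) hg (show j ≤ m by lia)
  calc eLpNorm (fun x ↦ ‖w x • iteratedFDeriv ℝ i f x‖ * ‖w x • iteratedFDeriv ℝ j g x‖) p μ
      ≤ eLpNorm (fun x ↦ ‖w x • iteratedFDeriv ℝ i f x‖) q₁ μ
          * eLpNorm (fun x ↦ ‖w x • iteratedFDeriv ℝ j g x‖) q₂ μ :=
        (eLpNorm_smul_le_mul_eLpNorm (p := q₁) (q := q₂) (r := p) hg_meas hf_meas :)
    _ = eLpNorm (fun x ↦ w x • iteratedFDeriv ℝ i f x) q₁ μ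
          * eLpNorm (fun x ↦ w x • iteratedFDeriv ℝ j g x) q₂ μ := by
        rw [eLpNorm_norm, eLpNorm_norm]
    _ ≤ (2 * sobolevConst μ K t) ^ k * weightedSobolevNorm μ w p m f
          * ((2 * sobolevConst μ K t) ^ l * weightedSobolevNorm μ w p m g) := by
        gcongr
        · exact eLpNorm_smul_iteratedFDeriv_le hw hf hp k hik hpq₁
        · exact eLpNorm_smul_iteratedFDeriv_le hw hg hp l hjl hpq₂
    _ = _ := by ring

theorem eLpNorm_smul_iteratedFDeriv_mul_le (hw : IsModerateWeight K w) (hw_one : ∀ x, 1 ≤ ‖w x‖)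
    {m n : ℕ} (hn : n ≤ m) {f g : E → A} (hf : ContDiff ℝ m f) (hg : ContDiff ℝ m g) (hp : 1 ≤ p)
    {t : ℝ≥0} (hp_inv : p⁻¹ = (2 * m - n : ℕ) * t) :
    eLpNorm (fun x ↦ w x • iteratedFDeriv ℝ n (fun y ↦ f y * g y) x) p μ
      ≤ 2 ^ n * (2 * sobolevConst μ K t) ^ (2 * m - n)
        * (weightedSobolevNorm μ w p m f * weightedSobolevNorm μ w p m g) := by
  set H : ℕ → E → ℝ := fun i ↦ (n.choose i : ℝ) • fun x ↦
    (‖w x • iteratedFDeriv ℝ i f x‖ * ‖w x • iteratedFDeriv ℝ (n - i) g x‖)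
  have H_meas (i : ℕ) (hi : i ∈ Finset.range (n + 1)) : AEStronglyMeasurable (H i) μ := by
    have := Finset.mem_range_succ_iff.1 hi
    exact ((hw.aestronglyMeasurable_norm_smul_iteratedFDeriv hf (by lia)).mul
      (hw.aestronglyMeasurable_norm_smul_iteratedFDeriv hg (by lia))).const_mul _
  calc eLpNorm (fun x ↦ w x • iteratedFDeriv ℝ n (fun y ↦ f y * g y) x) p μ
      ≤ eLpNorm (∑ i ∈ Finset.range (n + 1), H i) p μ :=
        eLpNorm_mono_real fun x ↦ by
          rw [Finset.sum_apply]
          exact norm_smul_iteratedFDeriv_mul_le hn hf hg (hw_one x) x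
    _ ≤ ∑ i ∈ Finset.range (n + 1), eLpNorm (H i) p μ := eLpNorm_sum_le H_meas hp
    _ ≤ ∑ i ∈ Finset.range (n + 1), n.choose i * ((2 * sobolevConst μ K t) ^ (2 * m - n)
          * (weightedSobolevNorm μ w p m f * weightedSobolevNorm μ w p m g)) := by
        refine Finset.sum_le_sum fun i hi ↦ ?_
        have := Finset.mem_range_succ_iff.1 hi
        have exponents : m - i + (m - (n - i)) = 2 * m - n := by lia
        rw [← exponents]
        calc eLpNorm (H i) p μ = n.choose i * eLpNorm (fun x ↦ ‖w x • iteratedFDeriv ℝ i f x‖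
                * ‖w x • iteratedFDeriv ℝ (n - i) g x‖) p μ := by
              rw [eLpNorm_const_smul, Real.enorm_natCast]
          _ ≤ _ := by
              gcongr
              exact eLpNorm_norm_smul_mul_norm_smul_le hw hf hg hp (by lia) (by lia)
                (exponents ▸ hp_inv)
    _ = _ := by
        rw [← Finset.sum_mul, ← Nat.cast_sum, Nat.sum_range_choose]
        push_cast
        ring

theorem exists_weightedSobolevNorm_mul_le (hw : IsModerateWeight K w) (hw_one : ∀ x, 1 ≤ ‖w x‖)
    (hp : 1 ≤ p) {m : ℕ} (hm : finrank ℝ E * p⁻¹ < m) :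
    ∃ C : ℝ≥0∞, C ≠ ∞ ∧ ∀ f g : E → A, ContDiff ℝ m f → ContDiff ℝ m g →
      weightedSobolevNorm μ w p m (fun x ↦ f x * g x)
        ≤ C * (weightedSobolevNorm μ w p m f * weightedSobolevNorm μ w p m g) := by
  have hp₀ : p ≠ 0 := (zero_lt_one.trans_le hp).ne'
  have p_inv_eq : p⁻¹ = p⁻¹.toNNReal := (ENNReal.coe_toNNReal (ENNReal.inv_ne_top.2 hp₀)).symm
  have hm₀ : 0 < m := by exact_mod_cast zero_le.trans_lt hm
  set t : ℕ → ℝ≥0 := fun n ↦ p⁻¹.toNNReal / (2 * m - n : ℕ)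
  have ht {n : ℕ} (hn : n ≤ m) : finrank ℝ E * t n < 1 := by
    rw [p_inv_eq] at hm
    have hm' : finrank ℝ E * p⁻¹.toNNReal < m := by exact_mod_cast hm
    have h2 : (m : ℝ≥0) ≤ (2 * m - n : ℕ) := by exact_mod_cast (by lia)
    rw [← mul_div_assoc, div_lt_one (lt_of_lt_of_le (by exact_mod_cast hm₀) h2)]
    exact hm'.trans_le h2
  have hp_inv {n : ℕ} (hn : n ≤ m) : p⁻¹ = (2 * m - n : ℕ) * (t n : ℝ≥0∞) := by
    have : ((2 * m - n : ℕ) : ℝ≥0) ≠ 0 := by exact_mod_cast (by lia)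
    rw [← ENNReal.coe_natCast, ← ENNReal.coe_mul, mul_div_cancel₀ _ this, ← p_inv_eq]
  refine ⟨∑ n ∈ Finset.range (m + 1), 2 ^ n * (2 * sobolevConst μ K (t n)) ^ (2 * m - n),
    ?_, fun f g hf hg ↦ ?_⟩
  · refine ENNReal.sum_ne_top.2 fun n hn ↦ ?_
    have := sobolevConst_ne_top (μ := μ) K (ht (Finset.mem_range_succ_iff.1 hn))
    finiteness
  · rw [weightedSobolevNorm, Finset.sum_mul]
    refine Finset.sum_le_sum fun n hn ↦ ?_
    have hnm := Finset.mem_range_succ_iff.1 hn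
    exact eLpNorm_smul_iteratedFDeriv_mul_le hw hw_one hnm hf hg hp (hp_inv hnm)

end SobolevAlgebra

section MultiIndex

variable {d : ℕ} {F : Type*} [NormedAddCommGroup F] [NormedSpace ℝ F]
  {f : EuclideanSpace ℝ (Fin d) → F}

theorem contDiff_pderiv' {k : ℕ} (hf : ContDiff ℝ (k + 1 : ℕ) f) (i : Fin d) :
    ContDiff ℝ k (pderiv' i f) :=
  (hf.fderiv_right (m := k) (by exact_mod_cast le_rfl)).clm_apply contDiff_const

theorem pderiv'_comm (hf : ContDiff ℝ 2 f) (i j : Fin d) :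
    pderiv' i (pderiv' j f) = pderiv' j (pderiv' i f) := by
  ext x
  have differentiableAt_fderiv : DifferentiableAt ℝ (fderiv ℝ f) x :=
    (hf.fderiv_right (m := 1) le_rfl).differentiable one_ne_zero x
  have second_deriv_eq (u v : EuclideanSpace ℝ (Fin d)) :
      fderiv ℝ (fun y ↦ fderiv ℝ f y u) x v = fderiv ℝ (fderiv ℝ f) x v u := by
    simp [fderiv_clm_apply differentiableAt_fderiv (differentiableAt_const u)]
  have symm : IsSymmSndFDerivAt ℝ f x := hf.contDiffAt.isSymmSndFDerivAt (by simp)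
  unfold pderiv'
  rw [second_deriv_eq, second_deriv_eq, symm]

/-- The iterated partial derivative of `f` along a word in the coordinates, the head of the word
being applied last. Unlike multi-indices, words of length `k` correspond to the coordinates of the
`k`-th Fréchet derivative. -/
noncomputable def wordDeriv (v : List (Fin d)) (f : EuclideanSpace ℝ (Fin d) → F) :
    EuclideanSpace ℝ (Fin d) → F :=
  v.foldr pderiv' f

theorem contDiff_wordDeriv {k : ℕ} (v : List (Fin d)) (hf : ContDiff ℝ (k + v.length : ℕ) f) :
    ContDiff ℝ k (wordDeriv v f) := by
  induction v generalizing k with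
  | nil => exact hf
  | cons i v ih => exact contDiff_pderiv' (ih (by rwa [add_right_comm])) i

theorem hasCompactSupport_wordDeriv (v : List (Fin d)) (hf : HasCompactSupport f) :
    HasCompactSupport (wordDeriv v f) := by
  induction v with
  | nil => exact hf
  | cons i v ih => exact ih.fderiv_apply ℝ _

theorem wordDeriv_eq_of_perm {v w : List (Fin d)} (hvw : v.Perm w) (hf : ContDiff ℝ v.length f) :
    wordDeriv v f = wordDeriv w f := by
  induction hvw with
  | nil => rfl
  | cons i _ ih => exact congrArg (pderiv' i) (ih (hf.of_le (by simp)))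
  | swap i j v => exact pderiv'_comm (contDiff_wordDeriv v (by rwa [add_comm])) j i
  | trans hvu _ ih₁ ih₂ => exact (ih₁ hf).trans (ih₂ (hvu.length_eq ▸ hf))

theorem wordDeriv_ofFn {k : ℕ} (hf : ContDiff ℝ k f) (v : Fin k → Fin d)
    (x : EuclideanSpace ℝ (Fin d)) :
    wordDeriv (List.ofFn v) f x
      = iteratedFDeriv ℝ k f x fun j ↦ EuclideanSpace.single (v j) 1 := by
  induction k generalizing x with
  | zero => simp [wordDeriv]
  | succ k ih =>
    have wordDeriv_tail : wordDeriv (List.ofFn fun j ↦ v j.succ) f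
        = fun y ↦ iteratedFDeriv ℝ k f y fun j ↦ EuclideanSpace.single (v j.succ) 1 :=
      funext fun y ↦ ih (hf.of_le (by simp)) _ y
    have differentiable_iteratedFDeriv : Differentiable ℝ (iteratedFDeriv ℝ k f) :=
      hf.differentiable_iteratedFDeriv (by exact_mod_cast k.lt_succ_self)
    rw [List.ofFn_succ, iteratedFDeriv_succ_apply_left]
    change fderiv ℝ (wordDeriv (List.ofFn fun j ↦ v j.succ) f) x _ = _
    rw [wordDeriv_tail,
      fderiv_continuousMultilinear_apply_const_apply (differentiable_iteratedFDeriv x)]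
    rfl

theorem norm_wordDeriv_le (v : List (Fin d)) (hf : ContDiff ℝ v.length f)
    (x : EuclideanSpace ℝ (Fin d)) :
    ‖wordDeriv v f x‖ ≤ ‖iteratedFDeriv ℝ v.length f x‖ := by
  conv_lhs => rw [← List.ofFn_get v, wordDeriv_ofFn hf]
  simpa using (iteratedFDeriv ℝ v.length f x).le_opNorm
    fun j ↦ EuclideanSpace.single (v.get j) (1 : ℝ)

theorem norm_iteratedFDeriv_le_sum_norm_wordDeriv {k : ℕ} (hf : ContDiff ℝ k f)
    (x : EuclideanSpace ℝ (Fin d)) :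
    ‖iteratedFDeriv ℝ k f x‖ ≤ ∑ v : Fin k → Fin d, ‖wordDeriv (List.ofFn v) f x‖ := by
  refine ContinuousMultilinearMap.opNorm_le_bound (by positivity) fun y ↦ ?_
  have y_eq : y = fun j ↦ ∑ i, y j i • EuclideanSpace.single i (1 : ℝ) :=
    funext fun j ↦ by simpa using ((EuclideanSpace.basisFun (Fin d) ℝ).sum_repr (y j)).symm
  calc ‖iteratedFDeriv ℝ k f x y‖
      = ‖∑ v : Fin k → Fin d, (∏ j, y j (v j)) • wordDeriv (List.ofFn v) f x‖ := by
        conv_lhs => rw [y_eq]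
        simp_rw [ContinuousMultilinearMap.map_sum, ContinuousMultilinearMap.map_smul_univ,
          wordDeriv_ofFn hf]
    _ ≤ ∑ v : Fin k → Fin d, (∏ j, ‖y j‖) * ‖wordDeriv (List.ofFn v) f x‖ := by
        refine norm_sum_le_of_le _ fun v _ ↦ ?_
        rw [norm_smul, norm_prod]
        gcongr
        exact PiLp.norm_apply_le _ _
    _ = (∑ v : Fin k → Fin d, ‖wordDeriv (List.ofFn v) f x‖) * ∏ j, ‖y j‖ := by
        rw [← Finset.mul_sum, mul_comm]

/-- The word of a multi-index `α`, in which the letter `i` occurs `α i` times. -/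
def multiIndexWord (α : Fin d → ℕ) : List (Fin d) :=
  (List.finRange d).flatMap fun i ↦ List.replicate (α i) i

theorem mderiv_eq_wordDeriv (α : Fin d → ℕ) (f : EuclideanSpace ℝ (Fin d) → F) :
    mderiv α f = wordDeriv (multiIndexWord α) f := by
  unfold mderiv multiIndexWord
  induction List.finRange d with
  | nil => rfl
  | cons i l ih =>
    have foldr_replicate (n : ℕ) (g : EuclideanSpace ℝ (Fin d) → F) :
        (List.replicate n i).foldr pderiv' g = (pderiv' i)^[n] g := by
      induction n with
      | zero => rfl
      | succ n ih => rw [Function.iterate_succ_apply', ← ih]; rfl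
    rw [List.foldr_cons, ih, List.flatMap_cons, wordDeriv, wordDeriv, List.foldr_append,
      foldr_replicate]

theorem length_multiIndexWord (α : Fin d → ℕ) : (multiIndexWord α).length = ∑ i, α i := by
  simp [multiIndexWord, List.length_flatMap, Fin.sum_univ_def]

theorem count_multiIndexWord (α : Fin d → ℕ) (i : Fin d) : (multiIndexWord α).count i = α i := by
  simp [multiIndexWord, List.count_flatMap, Function.comp_def, List.count_replicate,
    ← Fin.sum_univ_def]

theorem perm_multiIndexWord_count (v : List (Fin d)) :
    v.Perm (multiIndexWord fun i ↦ v.count i) :=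
  List.perm_iff_count.2 fun _ ↦ by rw [count_multiIndexWord]

theorem wordDeriv_eq_mderiv_count (v : List (Fin d)) (hf : ContDiff ℝ v.length f) :
    wordDeriv v f = mderiv (fun i ↦ v.count i) f := by
  rw [mderiv_eq_wordDeriv, wordDeriv_eq_of_perm (perm_multiIndexWord_count v) hf]

theorem sum_count (v : List (Fin d)) : ∑ i, v.count i = v.length := by
  rw [← length_multiIndexWord, ← (perm_multiIndexWord_count v).length_eq]

end MultiIndex

section NormComparison

variable {d : ℕ} {F : Type*} [NormedAddCommGroup F] [NormedSpace ℝ F]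
  {μ : Measure (EuclideanSpace ℝ (Fin d))} {w : EuclideanSpace ℝ (Fin d) → ℝ} {p : ℝ≥0∞} {m : ℕ}
  {f : EuclideanSpace ℝ (Fin d) → F}

/-- The multi-indices in `d` variables of order at most `m`, with entries in `Fin (m + 1)` as in
`Hnorm`. -/
def multiIndices (d m : ℕ) : Finset (Fin d → Fin (m + 1)) :=
  Finset.univ.filter fun α ↦ ∑ i, (α i : ℕ) ≤ m

theorem mem_multiIndices {α : Fin d → Fin (m + 1)} :
    α ∈ multiIndices d m ↔ ∑ i, (α i : ℕ) ≤ m := by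
  simp only [multiIndices, Finset.mem_filter_univ]

/-- The counterpart of `Hnorm` for an arbitrary weight and measure, valued in `ℝ≥0∞`, so that no
finiteness is needed to compare it with `weightedSobolevNorm`. -/
noncomputable def multiIndexSobolevNorm (μ : Measure (EuclideanSpace ℝ (Fin d)))
    (w : EuclideanSpace ℝ (Fin d) → ℝ) (p : ℝ≥0∞) (m : ℕ) (f : EuclideanSpace ℝ (Fin d) → F) :
    ℝ≥0∞ :=
  ∑ α ∈ multiIndices d m, eLpNorm (fun x ↦ w x • mderiv (fun i ↦ (α i : ℕ)) f x) p μ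

theorem eLpNorm_smul_mderiv_le_weightedSobolevNorm (hf : ContDiff ℝ m f) {α : Fin d → ℕ}
    (hα : ∑ i, α i ≤ m) :
    eLpNorm (fun x ↦ w x • mderiv α f x) p μ ≤ weightedSobolevNorm μ w p m f := by
  rw [← length_multiIndexWord] at hα
  refine le_trans (eLpNorm_mono fun x ↦ ?_)
    (eLpNorm_smul_iteratedFDeriv_le_weightedSobolevNorm hα f)
  rw [norm_smul, norm_smul, mderiv_eq_wordDeriv]
  gcongr
  exact norm_wordDeriv_le _ (hf.of_le (by exact_mod_cast hα)) x

theorem multiIndexSobolevNorm_le_mul_weightedSobolevNorm (hf : ContDiff ℝ m f) :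
    multiIndexSobolevNorm μ w p m f
      ≤ (multiIndices d m).card * weightedSobolevNorm μ w p m f := by
  rw [← nsmul_eq_mul]
  exact Finset.sum_le_card_nsmul _ _ _ fun α hα ↦
    eLpNorm_smul_mderiv_le_weightedSobolevNorm hf (mem_multiIndices.1 hα)

theorem eLpNorm_smul_wordDeriv_le_multiIndexSobolevNorm (hf : ContDiff ℝ m f) {v : List (Fin d)}
    (hv : v.length ≤ m) :
    eLpNorm (fun x ↦ w x • wordDeriv v f x) p μ ≤ multiIndexSobolevNorm μ w p m f := by
  let α : Fin d → Fin (m + 1) := fun i ↦ ⟨v.count i, by have := v.count_le_length (a := i); lia⟩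
  have hα : α ∈ multiIndices d m := mem_multiIndices.2 ((sum_count v).trans_le hv)
  have wordDeriv_eq : wordDeriv v f = mderiv (fun i ↦ (α i : ℕ)) f :=
    wordDeriv_eq_mderiv_count v (hf.of_le (by exact_mod_cast hv))
  rw [wordDeriv_eq]
  exact Finset.single_le_sum
    (f := fun α : Fin d → Fin (m + 1) ↦ eLpNorm (fun x ↦ w x • mderiv (fun i ↦ (α i : ℕ)) f x) p μ)
    (fun _ _ ↦ zero_le) hα

theorem eLpNorm_smul_iteratedFDeriv_le_mul_multiIndexSobolevNorm (hw : AEStronglyMeasurable w μ)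
    (hp : 1 ≤ p) (hf : ContDiff ℝ m f) {k : ℕ} (hkm : k ≤ m) :
    eLpNorm (fun x ↦ w x • iteratedFDeriv ℝ k f x) p μ
      ≤ (d ^ k : ℕ) * multiIndexSobolevNorm μ w p m f := by
  have hfk : ContDiff ℝ k f := hf.of_le (by exact_mod_cast hkm)
  set H : (Fin k → Fin d) → EuclideanSpace ℝ (Fin d) → ℝ :=
    fun v x ↦ ‖w x • wordDeriv (List.ofFn v) f x‖
  have H_meas (v : Fin k → Fin d) : AEStronglyMeasurable (H v) μ :=
    have : Continuous (wordDeriv (List.ofFn v) f) :=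
      (contDiff_wordDeriv (k := 0) _ (by simpa using hfk)).continuous
    (hw.smul this.aestronglyMeasurable).norm
  calc eLpNorm (fun x ↦ w x • iteratedFDeriv ℝ k f x) p μ
      ≤ eLpNorm (∑ v, H v) p μ := eLpNorm_mono_real fun x ↦ by
        simp only [H, norm_smul, Finset.sum_apply, ← Finset.mul_sum]
        gcongr
        exact norm_iteratedFDeriv_le_sum_norm_wordDeriv hfk x
    _ ≤ ∑ v, eLpNorm (H v) p μ := eLpNorm_sum_le (fun v _ ↦ H_meas v) hp
    _ ≤ ∑ _v : Fin k → Fin d, multiIndexSobolevNorm μ w p m f := by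
        gcongr with v
        rw [eLpNorm_norm]
        exact eLpNorm_smul_wordDeriv_le_multiIndexSobolevNorm hf (by simpa using hkm)
    _ = (d ^ k : ℕ) * multiIndexSobolevNorm μ w p m f := by simp

theorem weightedSobolevNorm_le_mul_multiIndexSobolevNorm (hw : AEStronglyMeasurable w μ)
    (hp : 1 ≤ p) (hf : ContDiff ℝ m f) :
    weightedSobolevNorm μ w p m f
      ≤ (∑ k ∈ Finset.range (m + 1), d ^ k : ℕ) * multiIndexSobolevNorm μ w p m f := by
  rw [Nat.cast_sum, Finset.sum_mul]
  exact Finset.sum_le_sum fun k hk ↦ eLpNorm_smul_iteratedFDeriv_le_mul_multiIndexSobolevNorm hw hp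
    hf (Finset.mem_range_succ_iff.1 hk)

theorem eLpNorm_smul_mderiv_ne_top [IsFiniteMeasureOnCompacts μ] (hw : Continuous w)
    (hf : ContDiff ℝ m f) (hf_supp : HasCompactSupport f) {α : Fin d → ℕ} (hα : ∑ i, α i ≤ m) :
    eLpNorm (fun x ↦ w x • mderiv α f x) p μ ≠ ∞ := by
  rw [← length_multiIndexWord] at hα
  rw [mderiv_eq_wordDeriv]
  have continuous_wordDeriv : Continuous (wordDeriv (multiIndexWord α) f) :=
    (contDiff_wordDeriv (k := 0) _ (hf.of_le (by simpa using hα))).continuous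
  exact ((hw.smul continuous_wordDeriv).memLp_of_hasCompactSupport
    (hasCompactSupport_wordDeriv _ hf_supp).smul_left).eLpNorm_ne_top

theorem exists_multiIndexSobolevNorm_mul_le [μ.IsAddHaarMeasure] {A : Type*} [NormedRing A]
    [NormedAlgebra ℝ A] {K : ℝ≥0} (hw : IsModerateWeight K w) (hw_one : ∀ x, 1 ≤ ‖w x‖)
    (hp : 1 ≤ p) (hm : d * p⁻¹ < m) :
    ∃ C : ℝ≥0∞, C ≠ ∞ ∧ ∀ f g : EuclideanSpace ℝ (Fin d) → A, ContDiff ℝ m f → ContDiff ℝ m g →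
      multiIndexSobolevNorm μ w p m (fun x ↦ f x * g x)
        ≤ C * (multiIndexSobolevNorm μ w p m f * multiIndexSobolevNorm μ w p m g) := by
  obtain ⟨C, hC, norm_mul_le⟩ := exists_weightedSobolevNorm_mul_le (A := A) (μ := μ) hw hw_one hp
    (by rwa [finrank_euclideanSpace_fin])
  set N : ℕ := ∑ k ∈ Finset.range (m + 1), d ^ k
  refine ⟨(multiIndices d m).card * (C * (N * N)), by finiteness, fun f g hf hg ↦ ?_⟩
  calc multiIndexSobolevNorm μ w p m (fun x ↦ f x * g x)
      ≤ (multiIndices d m).card * weightedSobolevNorm μ w p m (fun x ↦ f x * g x) :=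
        multiIndexSobolevNorm_le_mul_weightedSobolevNorm (hf.mul hg)
    _ ≤ (multiIndices d m).card
          * (C * (weightedSobolevNorm μ w p m f * weightedSobolevNorm μ w p m g)) := by
        gcongr
        exact norm_mul_le f g hf hg
    _ ≤ (multiIndices d m).card * (C * ((N * multiIndexSobolevNorm μ w p m f)
          * (N * multiIndexSobolevNorm μ w p m g))) := by
        have hw_meas := hw.measurable.aestronglyMeasurable (μ := μ)
        gcongr
        · exact weightedSobolevNorm_le_mul_multiIndexSobolevNorm hw_meas hp hf
        · exact weightedSobolevNorm_le_mul_multiIndexSobolevNorm hw_meas hp hg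
    _ = _ := by ring

end NormComparison

section JapaneseBracket

variable {d : ℕ}

theorem one_le_jb (x : EuclideanSpace ℝ (Fin d)) : 1 ≤ jb x :=
  Real.one_le_sqrt.2 (le_add_of_nonneg_right (sq_nonneg ‖x‖))

theorem jb_pos (x : EuclideanSpace ℝ (Fin d)) : 0 < jb x :=
  zero_lt_one.trans_le (one_le_jb x)

theorem continuous_jb_rpow (δ : ℝ) : Continuous fun x : EuclideanSpace ℝ (Fin d) ↦ jb x ^ δ := by
  have continuous_jb : Continuous fun x : EuclideanSpace ℝ (Fin d) ↦ jb x := by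
    unfold jb
    fun_prop
  exact continuous_jb.rpow_const fun x ↦ .inl (jb_pos x).ne'

theorem jb_le_two_mul_jb {x y : EuclideanSpace ℝ (Fin d)} (hxy : dist x y ≤ 1) :
    jb x ≤ 2 * jb y := by
  have norm_x_le : ‖x‖ ≤ ‖y‖ + 1 := by
    have := norm_le_norm_add_norm_sub' x y
    rw [← dist_eq_norm] at this
    linarith
  refine Real.sqrt_le_iff.2 ⟨by linarith [jb_pos y], ?_⟩
  rw [mul_pow, jb, Real.sq_sqrt (by positivity)]
  nlinarith [norm_nonneg x, sq_nonneg (‖y‖ - 1)]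

theorem isModerateWeight_jb_rpow {δ : ℝ} (hδ : 0 ≤ δ) :
    IsModerateWeight (2 ^ δ) fun x : EuclideanSpace ℝ (Fin d) ↦ jb x ^ δ where
  measurable := (continuous_jb_rpow δ).measurable
  enorm_le {x y} hxy := by
    rw [enorm_eq_nnnorm, enorm_eq_nnnorm, ← ENNReal.coe_mul, ENNReal.coe_le_coe,
      ← NNReal.coe_le_coe]
    have hx := (jb_pos x).le
    have hy := (jb_pos y).le
    calc ‖jb x ^ δ‖ = jb x ^ δ := Real.norm_of_nonneg (by positivity)
      _ ≤ (2 * jb y) ^ δ := by gcongr; exact jb_le_two_mul_jb hxy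
      _ = 2 ^ δ * jb y ^ δ := Real.mul_rpow zero_le_two hy
      _ = 2 ^ δ * ‖jb y ^ δ‖ := by rw [Real.norm_of_nonneg (by positivity)]

theorem one_le_norm_jb_rpow {δ : ℝ} (hδ : 0 ≤ δ) (x : EuclideanSpace ℝ (Fin d)) :
    1 ≤ ‖jb x ^ δ‖ :=
  (Real.one_le_rpow (one_le_jb x) hδ).trans (le_abs_self _)

theorem ofReal_Hnorm {F : Type*} [NormedAddCommGroup F] [NormedSpace ℝ F] {m : ℕ} (p δ : ℝ)
    {f : EuclideanSpace ℝ (Fin d) → F} (hf : ContDiff ℝ m f) (hf_supp : HasCompactSupport f) :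
    ENNReal.ofReal (Hnorm d m p δ f)
      = multiIndexSobolevNorm volume (fun x ↦ jb x ^ δ) (ENNReal.ofReal p) m f := by
  unfold Hnorm wLp
  rw [ENNReal.ofReal_sum_of_nonneg fun _ _ ↦ ENNReal.toReal_nonneg]
  exact Finset.sum_congr rfl fun α hα ↦ ENNReal.ofReal_toReal
    (eLpNorm_smul_mderiv_ne_top (continuous_jb_rpow δ) hf hf_supp (mem_multiIndices.1 hα))

theorem Hnorm_nonneg {F : Type*} [NormedAddCommGroup F] [NormedSpace ℝ F] (m : ℕ) (p δ : ℝ)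
    (f : EuclideanSpace ℝ (Fin d) → F) : 0 ≤ Hnorm d m p δ f :=
  Finset.sum_nonneg fun _ _ ↦ ENNReal.toReal_nonneg

end JapaneseBracket

theorem stmt19_general (d : ℕ) (p : ℝ) (hp : 1 ≤ p) (m : ℕ) (δ : ℝ) (hm : (d : ℝ) / p < m)
    (hδ : 0 ≤ δ) (A : Type*) [NormedRing A] [NormedAlgebra ℝ A] :
    ∃ C : ℝ, 0 < C ∧ ∀ f g : EuclideanSpace ℝ (Fin d) → A,
      ContDiff ℝ m f → HasCompactSupport f → ContDiff ℝ m g → HasCompactSupport g →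
        Hnorm d m p δ (fun x ↦ f x * g x) ≤ C * Hnorm d m p δ f * Hnorm d m p δ g := by
  have hm' : d * (ENNReal.ofReal p)⁻¹ < m := by
    rw [← ENNReal.ofReal_inv_of_pos (by linarith), ← ENNReal.ofReal_natCast d,
      ← ENNReal.ofReal_mul d.cast_nonneg, ← div_eq_mul_inv, ← ENNReal.ofReal_natCast m]
    exact (ENNReal.ofReal_lt_ofReal_iff_of_nonneg (by positivity)).2 hm
  obtain ⟨C, hC, norm_mul_le⟩ := exists_multiIndexSobolevNorm_mul_le (A := A) (d := d)
    (μ := volume) (isModerateWeight_jb_rpow hδ) (one_le_norm_jb_rpow hδ)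
    (ENNReal.one_le_ofReal.2 hp) hm'
  refine ⟨C.toReal + 1, by positivity, fun f g hf hf_supp hg hg_supp ↦ ?_⟩
  have hfN := Hnorm_nonneg m p δ f
  have hgN := Hnorm_nonneg m p δ g
  have Hnorm_mul_le := norm_mul_le f g hf hg
  rw [← ofReal_Hnorm p δ hf hf_supp, ← ofReal_Hnorm p δ hg hg_supp,
    ← ofReal_Hnorm p δ (hf.mul hg) hf_supp.mul_right, ← ENNReal.ofReal_toReal hC,
    ← ENNReal.ofReal_mul hfN, ← ENNReal.ofReal_mul (by positivity),
    ENNReal.ofReal_le_ofReal_iff (by positivity), ← mul_assoc] at Hnorm_mul_le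
  refine Hnorm_mul_le.trans ?_
  gcongr
  exact le_add_of_nonneg_right zero_le_one

/-- The weighted Sobolev space `H^{m,p}_δ(ℝ^d)` is a Banach algebra for `m > d/p`, `δ ≥ 0`:
`‖fg‖_{H^{m,p}_δ} ≤ C ‖f‖_{H^{m,p}_δ} ‖g‖_{H^{m,p}_δ}`. -/
theorem stmt19 (d : ℕ) (hd : 1 ≤ d) (p : ℝ) (hp : 1 ≤ p) (m : ℕ) (δ : ℝ)
    (hm : (d : ℝ) / p < m) (hδ : 0 ≤ δ) :
    ∃ C : ℝ, 0 < C ∧ ∀ f g : EuclideanSpace ℝ (Fin d) → ℝ,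
      ContDiff ℝ (⊤ : ℕ∞) f → HasCompactSupport f → ContDiff ℝ (⊤ : ℕ∞) g → HasCompactSupport g →
        Hnorm d m p δ (fun x => f x * g x) ≤ C * Hnorm d m p δ f * Hnorm d m p δ g := by
  obtain ⟨C, hC, Hnorm_mul_le⟩ := stmt19_general d p hp m δ hm hδ ℝ
  have le_smooth : (m : WithTop ℕ∞) ≤ (⊤ : ℕ∞) := by exact_mod_cast le_top
  exact ⟨C, hC, fun f g hf hf_supp hg ↦
    Hnorm_mul_le f g (hf.of_le le_smooth) hf_supp (hg.of_le le_smooth)⟩
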